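/- If a point (x,Λ) ∈ R^n × S^d satisfies the second-order necessary conditions (2NC) for problem (NSDP), then any triple (x,F,Λ) with F ∈ R^{d×d} and C(x) = FF^T satisfies the second-order necessary conditions (2NC) for problem (SSV). -/

import Mathlib

open Matrix

/-- `P` is the Moore–Penrose pseudoinverse of `X`. -/
def IsMoorePenrose {d : ℕ} (X P : Matrix (Fin d) (Fin d) ℝ) : Prop :=
  X * P * X = X ∧ P * X * P = P ∧ (X * P)ᵀ = X * P ∧ (P * X)ᵀ = P * X

/-- The directional derivative `DC_x[z]` of the matrix-valued map `C` at `x` along `z`. -/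
noncomputable def DC {n d : ℕ} (C : (Fin n → ℝ) → Matrix (Fin d) (Fin d) ℝ)
    (x z : Fin n → ℝ) : Matrix (Fin d) (Fin d) ℝ :=
  Matrix.of fun i j => deriv (fun t : ℝ => C (x + t • z) i j) 0

/-- The second directional derivative `D²C_x[z,z]`. -/
noncomputable def D2C {n d : ℕ} (C : (Fin n → ℝ) → Matrix (Fin d) (Fin d) ℝ)
    (x z : Fin n → ℝ) : Matrix (Fin d) (Fin d) ℝ :=
  Matrix.of fun i j => iteratedDeriv 2 (fun t : ℝ => C (x + t • z) i j) 0

/-- The second directional derivative `D²f_x[z,z]`. -/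
noncomputable def D2f {n : ℕ} (f : (Fin n → ℝ) → ℝ) (x z : Fin n → ℝ) : ℝ :=
  iteratedDeriv 2 (fun t : ℝ => f (x + t • z)) 0

/-- First-order conditions (NSDP-1C) at `(x,Λ)`: `∇f(x) = DC_x*(Λ)` (w.r.t. the dot
product on `ℝ^n` and the trace inner product on `S^d`), `ΛC(x) = 0`, `C(x) ⪰ 0`, `Λ ⪰ 0`. -/
noncomputable def NSDP1C {n d : ℕ} (f : (Fin n → ℝ) → ℝ)
    (C : (Fin n → ℝ) → Matrix (Fin d) (Fin d) ℝ)
    (x : Fin n → ℝ) (Λ : Matrix (Fin d) (Fin d) ℝ) : Prop :=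
  Λ.IsSymm ∧
  (∀ z : Fin n → ℝ, HasDerivAt (fun t : ℝ => f (x + t • z)) ((Λ * DC C x z).trace) 0) ∧
  Λ * C x = 0 ∧ (C x).PosSemidef ∧ Λ.PosSemidef

/-- Second-order necessary conditions (NSDP-2NC) at `(x,Λ)`. -/
noncomputable def NSDP2NC {n d : ℕ} (f : (Fin n → ℝ) → ℝ)
    (C : (Fin n → ℝ) → Matrix (Fin d) (Fin d) ℝ)
    (x : Fin n → ℝ) (Λ : Matrix (Fin d) (Fin d) ℝ) : Prop :=
  NSDP1C f C x Λ ∧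
    ∀ V : Matrix (Fin d) (Fin (d - (C x).rank)) ℝ, Vᵀ * V = 1 → C x * V = 0 →
      ∀ P : Matrix (Fin d) (Fin d) ℝ, IsMoorePenrose (C x) P →
        ∀ z : Fin n → ℝ, Vᵀ * DC C x z * V = 0 →
          0 ≤ D2f f x z - (Λ * D2C C x z).trace
              + 2 * (DC C x z * P * DC C x z * Λ).trace

/-- Second-order necessary conditions (SSV-2NC) at `(x,F,Λ)`. -/
noncomputable def SSV2NC {n d : ℕ} (f : (Fin n → ℝ) → ℝ)
    (C : (Fin n → ℝ) → Matrix (Fin d) (Fin d) ℝ)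
    (x : Fin n → ℝ) (F Λ : Matrix (Fin d) (Fin d) ℝ) : Prop :=
  (Λ.IsSymm ∧
    (∀ z : Fin n → ℝ, HasDerivAt (fun t : ℝ => f (x + t • z)) ((Λ * DC C x z).trace) 0) ∧
    Λ * F = 0 ∧ C x = F * Fᵀ) ∧
  ∀ (z : Fin n → ℝ) (Δ : Matrix (Fin d) (Fin d) ℝ),
    DC C x z = F * Δᵀ + Δ * Fᵀ →
      0 ≤ D2f f x z + 2 * (Λ * Δ * Δᵀ).trace - (Λ * D2C C x z).trace

lemma aux_spectral {d : ℕ} (A : Matrix (Fin d) (Fin d) ℝ) (hA : A.IsSymm) :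
    ∃ (U : Matrix (Fin d) (Fin d) ℝ) (w : Fin d → ℝ), Uᵀ * U = 1 ∧
      A = U * diagonal w * Uᵀ ∧ A.rank = Fintype.card {i // w i ≠ 0} := by
  have hH : A.IsHermitian := by
    rw [Matrix.IsHermitian, conjTranspose_eq_transpose_of_trivial]; exact hA
  refine ⟨hH.eigenvectorUnitary, hH.eigenvalues, ?_, ?_, hH.rank_eq_card_non_zero_eigs⟩
  · have := Unitary.coe_star_mul_self hH.eigenvectorUnitary
    rwa [star_eq_conjTranspose, conjTranspose_eq_transpose_of_trivial] at this
  · have := hH.spectral_theorem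
    rw [Unitary.conjStarAlgAut_apply] at this
    rw [star_eq_conjTranspose, conjTranspose_eq_transpose_of_trivial] at this
    exact this

lemma aux_exists {d : ℕ} (A : Matrix (Fin d) (Fin d) ℝ) (hA : A.IsSymm) :
    (∃ V : Matrix (Fin d) (Fin (d - A.rank)) ℝ, Vᵀ * V = 1 ∧ A * V = 0) ∧
    ∃ P : Matrix (Fin d) (Fin d) ℝ, IsMoorePenrose A P ∧ Pᵀ = P := by
  obtain ⟨U, w, hU, hAU, hr⟩ := aux_spectral A hA
  have key : ∀ a b : Fin d → ℝ, (U * diagonal a * Uᵀ) * (U * diagonal b * Uᵀ)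
      = U * diagonal (fun i => a i * b i) * Uᵀ := by
    intro a b
    calc _ = U * diagonal a * (Uᵀ * U) * diagonal b * Uᵀ := by simp only [Matrix.mul_assoc]
      _ = _ := by rw [hU, Matrix.mul_one, Matrix.mul_assoc U, diagonal_mul_diagonal]
  have keyT : ∀ a : Fin d → ℝ, (U * diagonal a * Uᵀ)ᵀ = U * diagonal a * Uᵀ := by
    intro a
    simp [transpose_mul, Matrix.mul_assoc]
  constructor
  · have hcard : Fintype.card (Fin (d - A.rank)) = Fintype.card {i // w i = 0} := by
      have h1 := Fintype.card_subtype_compl (fun i => w i = 0)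
      have h2 := Fintype.card_subtype_le (fun i => w i = 0)
      rw [Fintype.card_fin] at h1 h2 ⊢
      have h3 : A.rank = Fintype.card {i // ¬ w i = 0} := hr
      omega
    let e := Fintype.equivOfCardEq hcard
    refine ⟨U.submatrix id (fun k => (e k : Fin d)), ?_, ?_⟩
    · have : (U.submatrix id (fun k => (e k : Fin d)))ᵀ * U.submatrix id (fun k => (e k : Fin d))
          = (Uᵀ * U).submatrix (fun k => (e k : Fin d)) (fun k => (e k : Fin d)) := by
        ext i j; simp [Matrix.mul_apply]
      rw [this, hU]
      exact submatrix_one _ (Subtype.val_injective.comp e.injective)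
    · have : A * U.submatrix id (fun k => (e k : Fin d))
          = (A * U).submatrix id (fun k => (e k : Fin d)) := by
        ext i j; simp [Matrix.mul_apply]
      rw [this]
      have h2 : A * U = U * diagonal w := by
        conv_lhs => rw [hAU]
        rw [Matrix.mul_assoc, hU, Matrix.mul_one]
      rw [h2]
      ext i k
      simp [(e k).2]
  · refine ⟨U * diagonal (fun i => (w i)⁻¹) * Uᵀ, ?_, keyT _⟩
    rw [hAU]
    refine ⟨?_, ?_, ?_, ?_⟩
    · rw [key, key]; congr 3; ext i; exact mul_inv_mul_cancel _
    · rw [key, key]; congr 3; ext i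
      by_cases h : w i = 0 <;> simp [h]
    · rw [key, keyT]
    · rw [key, keyT]

/-- Main theorem. -/
theorem statement10 {n d : ℕ} (f : (Fin n → ℝ) → ℝ)
    (C : (Fin n → ℝ) → Matrix (Fin d) (Fin d) ℝ)
    (hf : ContDiff ℝ 2 f)
    (hC : ∀ i j, ContDiff ℝ 2 fun x => C x i j)
    (hCsymm : ∀ x, (C x).IsSymm)
    (x : Fin n → ℝ) (Λ : Matrix (Fin d) (Fin d) ℝ)
    (h2 : NSDP2NC f C x Λ)
    (F : Matrix (Fin d) (Fin d) ℝ) (hF : C x = F * Fᵀ) :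
    SSV2NC f C x F Λ := by
  obtain ⟨⟨hΛ, hd, hΛC, hCp, hΛp⟩, h⟩ := h2
  have hΛF : Λ * F = 0 := by
    rw [hF] at hΛC
    have := (mul_self_mul_conjTranspose_eq_zero F Λ).1
    rw [conjTranspose_eq_transpose_of_trivial] at this
    exact this hΛC
  have hFΛ : Fᵀ * Λ = 0 := by
    have := congrArg transpose hΛF
    rwa [transpose_mul, hΛ.eq, transpose_zero] at this
  refine ⟨⟨hΛ, hd, hΛF, hF⟩, ?_⟩
  intro z Δ hz
  obtain ⟨⟨V, hV, hCV⟩, P, hP, hPT⟩ := aux_exists (C x) (hCsymm x)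
  have hFV : Fᵀ * V = 0 := by
    have h0 := (self_mul_conjTranspose_mul_eq_zero F V).1
    rw [conjTranspose_eq_transpose_of_trivial, ← hF] at h0
    exact h0 hCV
  have hVF : Vᵀ * F = 0 := by
    have := congrArg transpose hFV
    rwa [transpose_mul, transpose_transpose, transpose_zero] at this
  have h1 := h V hV hCV P hP z (by
    rw [hz, Matrix.mul_add, Matrix.add_mul, ← Matrix.mul_assoc, hVF, ← Matrix.mul_assoc,
      Matrix.mul_assoc (Vᵀ * Δ), hFV]
    simp)
  have hDΛ : DC C x z * Λ = F * Δᵀ * Λ := by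
    rw [hz, Matrix.add_mul, Matrix.mul_assoc Δ, hFΛ]; simp
  have hΛD : Λ * DC C x z = Λ * Δ * Fᵀ := by
    rw [hz, Matrix.mul_add, ← Matrix.mul_assoc, hΛF, ← Matrix.mul_assoc]; simp
  have htr : (DC C x z * P * DC C x z * Λ).trace = (Λ * Δ * (Fᵀ * P * F) * Δᵀ).trace := by
    rw [Matrix.mul_assoc _ _ Λ, hDΛ, ← Matrix.mul_assoc, trace_mul_comm]
    simp only [← Matrix.mul_assoc]
    rw [hΛD]
  have hQT : (Fᵀ * P * F)ᵀ = Fᵀ * P * F := by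
    simp [transpose_mul, hPT, Matrix.mul_assoc]
  have hQ2 : (Fᵀ * P * F) * (Fᵀ * P * F) = Fᵀ * P * F := by
    have h3 := hP.2.1
    rw [hF] at h3
    calc _ = Fᵀ * (P * (F * Fᵀ) * P) * F := by simp only [Matrix.mul_assoc]
      _ = _ := by rw [h3]
  generalize Fᵀ * P * F = Q at *
  have hR : (1 - Q) * (1 - Q)ᵀ = 1 - Q := by
    rw [transpose_sub, hQT, transpose_one, Matrix.sub_mul, Matrix.mul_sub, Matrix.mul_sub, hQ2]
    simp
  have hnn := (hΛp.conjTranspose_mul_mul_same (Δ * (1 - Q))).trace_nonneg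
  rw [conjTranspose_eq_transpose_of_trivial, Matrix.mul_assoc, trace_mul_comm] at hnn
  have h4 : Λ * (Δ * (1 - Q)) * (Δ * (1 - Q))ᵀ = Λ * Δ * Δᵀ - Λ * Δ * Q * Δᵀ := by
    calc _ = Λ * Δ * ((1 - Q) * (1 - Q)ᵀ) * Δᵀ := by
          rw [transpose_mul]; simp only [Matrix.mul_assoc]
      _ = _ := by rw [hR, Matrix.mul_sub, Matrix.sub_mul, Matrix.mul_one]
  rw [h4, trace_sub] at hnn
  rw [htr] at h1
  linarith
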